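/- arXiv:2403.17193 — 3 statements merged into one kernel-verified Lean document; each statement's English description precedes it below -/
import Mathlib

section
/- Every nonzero 2-dimensional transposed Leibniz–Poisson algebra (T, ·, [−,−]) over ℂ is isomorphic to one of the following algebras, given on a basis e1, e2 (all unlisted products of basis elements, other than those forced by commutativity of ·, are zero): with · ≡ 0: T1: [e1,e1] = e2; T2: [e1,e2] = e2, [e2,e1] = −e2; and: T3: e1·e1 = e1, e2·e2 = e2, [−,−] ≡ 0; T4: e1·e1 = e1, e1·e2 = e2, [e1,e1] = e2; T5^α (α ∈ ℂ): e1·e1 = e1, e1·e2 = e2, [e1,e2] = α·e2, [e2,e1] = −α·e2; T6: e1·e1 = e1, [−,−] ≡ 0; T7^α (α ∈ ℂ): e1·e1 = e2, [e1,e1] = α·e2; T8: e1·e1 = e2, [e1,e2] = e2, [e2,e1] = −e2. -/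
noncomputable section

/-- The 2-dimensional complex vector space. -/
abbrev V2 : Type := Fin 2 → ℂ

/-- The bilinear multiplication on `V2` determined by a table of structure constants:
`c i j` is the product of the `i`-th and `j`-th basis vectors. -/
def tm (c : Fin 2 → Fin 2 → V2) : V2 → V2 → V2 :=
  fun x y => ∑ i, ∑ j, (x i * y j) • c i j

/-- Multiplication table with the given values of `e1*e1`, `e1*e2`, `e2*e1`, `e2*e2`. -/
def tbl (a b c d : V2) : Fin 2 → Fin 2 → V2 := ![![a, b], ![c, d]]

/-- The zero multiplication on `V2`. -/
def zm : V2 → V2 → V2 := fun _ _ => 0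

/-- Isomorphism of algebras with one multiplication: a ℂ-linear bijection preserving
the multiplication. -/
def Iso1 {A : Type*} [AddCommGroup A] [Module ℂ A] {B : Type*} [AddCommGroup B]
    [Module ℂ B] (μ : A → A → A) (ν : B → B → B) : Prop :=
  ∃ φ : A ≃ₗ[ℂ] B, ∀ x y, φ (μ x y) = ν (φ x) (φ y)

/-- Isomorphism of algebras with two multiplications: a ℂ-linear bijection preserving
both multiplications. -/
def Iso2 {A : Type*} [AddCommGroup A] [Module ℂ A] {B : Type*} [AddCommGroup B]
    [Module ℂ B] (μ₁ μ₂ : A → A → A) (ν₁ ν₂ : B → B → B) : Prop :=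
  ∃ φ : A ≃ₗ[ℂ] B,
    (∀ x y, φ (μ₁ x y) = ν₁ (φ x) (φ y)) ∧ (∀ x y, φ (μ₂ x y) = ν₂ (φ x) (φ y))

/-- The commutative associative algebra A01: `e1·e1 = e1`, `e2·e2 = e2`. -/
def cA01 : Fin 2 → Fin 2 → V2 := tbl ![1,0] 0 0 ![0,1]

/-- The commutative associative algebra A02: `e1·e1 = e1`, `e1·e2 = e2·e1 = e2`. -/
def cA02 : Fin 2 → Fin 2 → V2 := tbl ![1,0] ![0,1] ![0,1] 0

/-- The commutative associative algebra A03: `e1·e1 = e1`. -/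
def cA03 : Fin 2 → Fin 2 → V2 := tbl ![1,0] 0 0 0

/-- The commutative associative algebra A04: `e1·e1 = e2`. -/
def cA04 : Fin 2 → Fin 2 → V2 := tbl ![0,1] 0 0 0

/-!
Transposed compatibility says that every operator `z · _` is a `1/2`-derivation of the bracket.
On a plane, a `1/2`-derivation that is a projection of rank one forces the bracket to vanish,
while one that is nonzero of square zero, `e ↦ f ↦ 0`, forces `[e, e] = b f`,
`[e, f] = -[f, e] = d f`, `[f, f] = 0` with `b d = 0`. A nonzero commutative associative
multiplication on a plane always provides such an operator: either some idempotent `e` kills a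
nonzero vector, or `1` is adjoined to an `n` with `n² = 0`, or the algebra is spanned by some `x`
and `x²` with `x³ = 0`.
-/

open Module

section Field

variable {K T : Type*} [Field K] [AddCommGroup T] [Module K T]

/-- The structure constants of two multiplications on the same space with respect to a common
basis, `c i j k` and `d i j k` being the coefficients at `b k` of the products of `b i` and
`b j`. -/
def HasStructureConstants {ι : Type*} [Fintype ι] (mul br : T →ₗ[K] T →ₗ[K] T)
    (c d : ι → ι → ι → K) : Prop :=
  ∃ b : Basis ι K T, ∀ i j,
    mul (b i) (b j) = ∑ k, c i j k • b k ∧ br (b i) (b j) = ∑ k, d i j k • b k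

/-- Symmetric Leibniz brackets: both the right and the left multiplications are derivations. -/
structure IsSymmLeibniz (br : T →ₗ[K] T →ₗ[K] T) : Prop where
  right_leibniz : ∀ x y z, br (br x y) z = br (br x z) y + br x (br y z)
  left_leibniz : ∀ x y z, br x (br y z) = br (br x y) z + br y (br x z)

/-- `1/2`-derivations of a bilinear product, with the factor `1/2` moved to the other side. -/
def IsHalfDerivation (br : T →ₗ[K] T →ₗ[K] T) (D : T →ₗ[K] T) : Prop :=
  ∀ x y, (2 : K) • D (br x y) = br (D x) y + br x (D y)

variable {mul br : T →ₗ[K] T →ₗ[K] T} {e f : T}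

theorem linearIndependent_pair_of_map {S : Type*} [AddCommGroup S] [Module K S] (D : T →ₗ[K] S)
    (he : D e ≠ 0) (hf : f ≠ 0) (hDf : D f = 0) : LinearIndependent K ![e, f] := by
  rw [LinearIndependent.pair_iff]
  intro a b hab
  have ha : a = 0 := by simpa [hDf, he] using congr(D $hab)
  exact ⟨ha, by simpa [ha, hf] using hab⟩

theorem exists_eq_smul_add_smul (hdim : finrank K T = 2) (hl : LinearIndependent K ![e, f])
    (v : T) : ∃ a b : K, v = a • e + b • f := by
  have : FiniteDimensional K T := .of_finrank_eq_succ hdim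
  have hv : v ∈ Submodule.span K (Set.range ![e, f]) := by
    rw [hl.span_eq_top_of_card_eq_finrank' (by simp [hdim])]
    trivial
  obtain ⟨c, rfl⟩ := (Submodule.mem_span_range_iff_exists_fun K).mp hv
  exact ⟨c 0, c 1, by simp⟩

theorem exists_eq_smul_of_map_eq_zero {S : Type*} [AddCommGroup S] [Module K S]
    (hdim : finrank K T = 2) (D : T →ₗ[K] S) (he : D e ≠ 0) (hf : f ≠ 0) (hDf : D f = 0) {v : T}
    (hv : D v = 0) : ∃ s : K, v = s • f := by
  obtain ⟨a, b, rfl⟩ :=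
    exists_eq_smul_add_smul hdim (linearIndependent_pair_of_map D he hf hDf) v
  have ha : a = 0 := by simpa [hDf, he] using hv
  exact ⟨b, by simp [ha]⟩

theorem hasStructureConstants_of_pair (hdim : finrank K T = 2) (hl : LinearIndependent K ![e, f])
    {c d : Fin 2 → Fin 2 → Fin 2 → K}
    (hmul : ∀ i j, mul (![e, f] i) (![e, f] j) = c i j 0 • e + c i j 1 • f)
    (hbr : ∀ i j, br (![e, f] i) (![e, f] j) = d i j 0 • e + d i j 1 • f) :
    HasStructureConstants mul br c d :=
  ⟨basisOfLinearIndependentOfCardEqFinrank hl (by simp [hdim]), fun i j => by simp [hmul, hbr]⟩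

namespace IsSymmLeibniz

theorem apply_apply_self (h : IsSymmLeibniz br) (x : T) : br x (br x x) = 0 := by
  simpa using h.right_leibniz x x x

theorem apply_self_apply (h : IsSymmLeibniz br) (x : T) : br (br x x) x = 0 := by
  simpa using h.left_leibniz x x x

theorem apply_self_apply_self (h : IsSymmLeibniz br) (x : T) : br (br x x) (br x x) = 0 := by
  rw [h.right_leibniz, h.apply_apply_self, map_zero, map_zero, LinearMap.zero_apply, add_zero]

end IsSymmLeibniz

theorem exists_pair_of_isAlt (hdim : finrank K T = 2) (halt : br.IsAlt) (hbr : br ≠ 0) :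
    ∃ e f, LinearIndependent K ![e, f] ∧ br e f = f := by
  obtain ⟨x, y, hxy⟩ : ∃ x y, br x y ≠ 0 := by
    by_contra! h
    exact hbr (LinearMap.ext₂ h)
  obtain ⟨f, hf⟩ : ∃ f, f = br x y := ⟨_, rfl⟩
  have hf0 : f ≠ 0 := hf ▸ hxy
  obtain ⟨w, hl⟩ := exists_linearIndependent_pair_of_one_lt_finrank (by rw [hdim]; norm_num) hf0
  obtain ⟨p, q, rfl⟩ := exists_eq_smul_add_smul hdim hl x
  obtain ⟨r, s, rfl⟩ := exists_eq_smul_add_smul hdim hl y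
  have hwf : br ((q * r - p * s) • w) f = f := by
    conv_rhs => rw [hf]
    simp only [map_add, map_smul, LinearMap.add_apply, LinearMap.smul_apply, halt.self_eq_zero,
      ← halt.neg w f]
    module
  refine ⟨_, f, linearIndependent_pair_of_map (br.flip f) ?_ hf0 (halt f), hwf⟩
  rwa [LinearMap.flip_apply, hwf]

theorem hasStructureConstants_of_mul_eq_zero (hdim : finrank K T = 2) (hleib : IsSymmLeibniz br)
    (hbr : br ≠ 0) :
    HasStructureConstants 0 br 0 ![![![0, 1], 0], ![0, 0]] ∨
      HasStructureConstants 0 br 0 ![![0, ![0, 1]], ![![0, -1], 0]] := by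
  by_cases halt : br.IsAlt
  · obtain ⟨e, f, hl, hef⟩ := exists_pair_of_isAlt hdim halt hbr
    have hfe : br f e = -f := by rw [← halt.neg, hef]
    exact .inr (hasStructureConstants_of_pair hdim hl (by simp)
      (by simp [Fin.forall_fin_two, halt.self_eq_zero, hef, hfe]))
  · obtain ⟨x, hx⟩ : ∃ x, br x x ≠ 0 := not_forall.mp halt
    have hl := linearIndependent_pair_of_map (br x) hx hx (hleib.apply_apply_self x)
    exact .inl (hasStructureConstants_of_pair hdim hl (by simp)
      (by simp [Fin.forall_fin_two, hleib.apply_apply_self, hleib.apply_self_apply,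
        hleib.apply_self_apply_self]))

section CommAssoc

theorem inv_smul_mul_self {x : T} {a : K} (ha : a ≠ 0) (hx : mul x x = a • x) :
    mul (a⁻¹ • x) (a⁻¹ • x) = a⁻¹ • x := by
  simp [hx, ha]

theorem exists_mul_self_eq_smul_or_mul_mul_self_eq_zero (hdim : finrank K T = 2)
    (hcomm : ∀ x y, mul x y = mul y x)
    (hassoc : ∀ x y z, mul (mul x y) z = mul x (mul y z)) {x : T} (hx : mul x x ≠ 0) :
    (∃ a : K, a ≠ 0 ∧ ∃ y, y ≠ 0 ∧ mul y y = a • y) ∨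
      LinearIndependent K ![x, mul x x] ∧ mul x (mul x x) = 0 := by
  by_cases hl : LinearIndependent K ![x, mul x x]
  · obtain ⟨p, q, hpq⟩ := exists_eq_smul_add_smul hdim hl (mul x (mul x x))
    by_cases hp : p = 0
    · by_cases hq : q = 0
      · exact .inr ⟨hl, by simp [hpq, hp, hq]⟩
      · refine .inl ⟨q ^ 2, by simp [hq], mul x x, hx, ?_⟩
        simp [hassoc, hpq, hp, smul_smul, pow_two]
    · -- `x³ = p x + q x²`, so `x² - q x` acts as `p` on `x`, hence on the multiples of `x`
      have hy : mul (mul x x - q • x) x = p • x := by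
        rw [hcomm, map_sub, hpq, map_smul, add_sub_cancel_right]
      refine .inl ⟨p, hp, mul x x - q • x, fun h => ?_, ?_⟩
      · have hx0 : x ≠ 0 := hl.ne_zero 0
        exact hp (by simpa [h, hx0, eq_comm] using hy)
      · have hyxx : mul (mul x x - q • x) (mul x x) = p • mul x x := by
          rw [← hassoc, hy, map_smul, LinearMap.smul_apply]
        rw [map_sub, map_smul, hyxx, hy, smul_sub, smul_comm p]
  · have hx0 : x ≠ 0 := by
      rintro rfl
      simp at hx
    rw [LinearIndependent.pair_iff' hx0] at hl
    push Not at hl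
    obtain ⟨a, ha⟩ := hl
    refine .inl ⟨a, fun h => hx ?_, x, hx0, ha.symm⟩
    rw [← ha, h, zero_smul]

theorem exists_mul_self_ne_zero [NeZero (2 : K)] (hcomm : ∀ x y, mul x y = mul y x)
    (hmul : mul ≠ 0) : ∃ x, mul x x ≠ 0 := by
  by_contra! halt
  refine hmul (LinearMap.ext₂ fun x y => ?_)
  have h2 : (2 : K) • mul x y = 0 := by
    rw [two_smul]
    nth_rw 1 [← LinearMap.IsAlt.neg halt, hcomm]
    exact neg_add_cancel _
  exact (smul_eq_zero_iff_right two_ne_zero).mp h2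

theorem exists_mul_self_eq_smul_one [NeZero (2 : K)] (hdim : finrank K T = 2)
    (hcomm : ∀ x y, mul x y = mul y x) (he : e ≠ 0) (hone : ∀ x, mul e x = x) :
    ∃ (m : T) (c : K), LinearIndependent K ![e, m] ∧ mul m m = c • e := by
  obtain ⟨x, hl⟩ := exists_linearIndependent_pair_of_one_lt_finrank (by rw [hdim]; norm_num) he
  obtain ⟨r, s, hxx⟩ := exists_eq_smul_add_smul hdim hl (mul x x)
  refine ⟨(-(s / 2)) • e + x, r + (s / 2) ^ 2,
    (LinearIndependent.pair_add_smul_right_iff _).mpr hl, ?_⟩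
  simp only [map_add, map_smul, LinearMap.add_apply, LinearMap.smul_apply, hcomm x e, hone, hxx]
  match_scalars <;> field

theorem exists_sq_zero_or_idempotent_mul_eq_zero [NeZero (2 : K)] (hsq : ∀ a : K, IsSquare a)
    (hdim : finrank K T = 2) (hcomm : ∀ x y, mul x y = mul y x) (he : e ≠ 0)
    (hone : ∀ x, mul e x = x) :
    (∃ n, n ≠ 0 ∧ mul n n = 0) ∨ ∃ u g, u ≠ 0 ∧ g ≠ 0 ∧ mul u u = u ∧ mul u g = 0 := by
  obtain ⟨m, c, hl, hmm⟩ := exists_mul_self_eq_smul_one hdim hcomm he hone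
  obtain ⟨t, rfl⟩ := hsq c
  have hne (a : K) : a • e + m ≠ 0 :=
    ((LinearIndependent.pair_add_smul_right_iff a).mpr hl).ne_zero 1
  by_cases ht : t = 0
  · exact .inl ⟨m, by simpa using hne 0, by simp [hmm, ht]⟩
  · have h2t : 2 * t ≠ 0 := mul_ne_zero two_ne_zero ht
    have hu : mul (t • e + m) (t • e + m) = (2 * t) • (t • e + m) := by
      simp only [map_add, map_smul, LinearMap.add_apply, LinearMap.smul_apply, hcomm m e, hone,
        hmm]
      module
    have hug : mul (t • e + m) ((-t) • e + m) = 0 := by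
      simp only [map_add, map_smul, LinearMap.add_apply, LinearMap.smul_apply, hcomm m e, hone,
        hmm]
      module
    exact .inr ⟨(2 * t)⁻¹ • (t • e + m), (-t) • e + m,
      smul_ne_zero (inv_ne_zero h2t) (hne t), hne (-t), inv_smul_mul_self h2t hu, 
      by rw [map_smul, LinearMap.smul_apply, hug, smul_zero]⟩

theorem exists_sq_zero_or_idempotent_mul_eq_zero_of_idempotent [NeZero (2 : K)]
    (hsq : ∀ a : K, IsSquare a) (hdim : finrank K T = 2) (hcomm : ∀ x y, mul x y = mul y x)
    (hassoc : ∀ x y z, mul (mul x y) z = mul x (mul y z)) (he : e ≠ 0) (hee : mul e e = e) :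
    (∃ e f, e ≠ 0 ∧ f ≠ 0 ∧ mul e e = e ∧ mul e f = 0) ∨
      ∃ e n, e ≠ 0 ∧ n ≠ 0 ∧ mul e e = e ∧ mul e n = n ∧ mul n n = 0 := by
  by_cases hone : ∀ x, mul e x = x
  · rcases exists_sq_zero_or_idempotent_mul_eq_zero hsq hdim hcomm he hone with ⟨n, hn, hnn⟩ | h
    · exact .inr ⟨e, n, he, hn, hee, hone n, hnn⟩
    · exact .inl h
  · obtain ⟨x, hx⟩ := not_forall.mp hone
    refine .inl ⟨e, mul e x - x, he, sub_ne_zero.mpr hx, hee, ?_⟩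
    rw [map_sub, ← hassoc, hee, sub_self]

end CommAssoc

section HalfDerivation

variable {D : T →ₗ[K] T}

theorem apply_self_eq_zero_of_eq_smul {x : T} {s : K} (hcube : br x (br x x) = 0)
    (hx : br x x = s • x) : br x x = 0 := by
  have h : s • br x x = 0 := by rw [← map_smul, ← hx, hcube]
  rcases smul_eq_zero.mp h with rfl | h
  · rw [hx, zero_smul]
  · exact h

theorem IsHalfDerivation.eq_zero_of_projection [NeZero (2 : K)] (hdim : finrank K T = 2)
    (hD : IsHalfDerivation br D) (hcube : ∀ x, br x (br x x) = 0) (he : e ≠ 0) (hf : f ≠ 0)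
    (hDe : D e = e) (hDf : D f = 0) : br = 0 := by
  have hl : LinearIndependent K ![e, f] :=
    linearIndependent_pair_of_map D (by rwa [hDe]) hf hDf
  have eq_zero_of_two_smul (v : T) (hv : (2 : K) • D v = v) : v = 0 := by
    obtain ⟨a, b, rfl⟩ := exists_eq_smul_add_smul hdim hl v
    obtain ⟨ha, hb⟩ := hl.eq_of_pair (s := 2 * a) (t := 0) (s' := a) (t' := b)
      (by rw [← hv]; simp [hDe, hDf, mul_smul])
    simp [← hb, show a = 0 by linear_combination ha]
  have hef : br e f = 0 := eq_zero_of_two_smul _ (by simp [hD e f, hDe, hDf])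
  have hfe : br f e = 0 := eq_zero_of_two_smul _ (by simp [hD f e, hDe, hDf])
  have hee : br e e = 0 := by
    have hfix : D (br e e) = br e e :=
      smul_right_injective T (two_ne_zero (α := K)) (by simp [hD e e, hDe, two_smul])
    obtain ⟨a, b, hab⟩ := exists_eq_smul_add_smul hdim hl (br e e)
    have hrange : br e e = a • e := by
      rw [← hfix, hab]
      simp [hDe, hDf]
    exact apply_self_eq_zero_of_eq_smul (hcube e) hrange
  have hff : br f f = 0 := by
    have hker : D (br f f) = 0 :=
      smul_right_injective T (two_ne_zero (α := K)) (by simp [hD f f, hDf])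
    obtain ⟨s, hs⟩ := exists_eq_smul_of_map_eq_zero hdim D (by rwa [hDe]) hf hDf hker
    exact apply_self_eq_zero_of_eq_smul (hcube f) hs
  refine LinearMap.ext₂ fun x y => ?_
  obtain ⟨a, b, rfl⟩ := exists_eq_smul_add_smul hdim hl x
  obtain ⟨a', b', rfl⟩ := exists_eq_smul_add_smul hdim hl y
  simp [hee, hef, hfe, hff]

theorem IsHalfDerivation.exists_bracket_of_sq_zero [NeZero (2 : K)] (hdim : finrank K T = 2)
    (hD : IsHalfDerivation br D) (hcube : br e (br e e) = 0) (hf : f ≠ 0)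
    (hDe : D e = f) (hDf : D f = 0) :
    ∃ b d : K, br e e = b • f ∧ br e f = d • f ∧ br f e = -(d • f) ∧ br f f = 0 ∧
      (b = 0 ∨ d = 0) := by
  have hDe0 : D e ≠ 0 := by rwa [hDe]
  have hl := linearIndependent_pair_of_map D hDe0 hf hDf
  obtain ⟨a, b, hee⟩ := exists_eq_smul_add_smul hdim hl (br e e)
  have hsum : br f e + br e f = (2 * a) • f := by
    simpa [hee, hDe, hDf, mul_smul] using (hD e e).symm
  have hDef : (2 : K) • D (br e f) = br f f := by simpa [hDe, hDf] using hD e f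
  have hDfe : (2 : K) • D (br f e) = br f f := by simpa [hDe, hDf] using hD f e
  have hff : br f f = 0 := by
    have h : (2 : K) • br f f = 0 := by
      calc (2 : K) • br f f = (2 : K) • D (br f e + br e f) := by
            rw [map_add, smul_add, hDef, hDfe, two_smul]
        _ = 0 := by simp [hsum, hDf]
    exact (smul_eq_zero_iff_right two_ne_zero).mp h
  obtain ⟨d, hef⟩ : ∃ d : K, br e f = d • f :=
    exists_eq_smul_of_map_eq_zero hdim D hDe0 hf hDf
      ((smul_eq_zero_iff_right (two_ne_zero (α := K))).mp (hDef.trans hff))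
  obtain ⟨ha, hbd⟩ : a = 0 ∧ (b = 0 ∨ d = 0) := by
    have h : (a * a) • e + (a * b + b * d) • f = 0 := by
      rw [← hcube, hee, map_add, map_smul, map_smul, hee, hef]
      module
    obtain ⟨haa, hab⟩ := LinearIndependent.pair_iff.mp hl _ _ h
    have ha : a = 0 := mul_self_eq_zero.mp haa
    exact ⟨ha, by simpa [ha] using hab⟩
  refine ⟨b, d, by simp [hee, ha], hef, ?_, hff, hbd⟩
  rw [← hef, eq_neg_iff_add_eq_zero, hsum, ha, mul_zero, zero_smul]

end HalfDerivation

theorem hasStructureConstants_of_idempotent_mul_eq_zero (hdim : finrank K T = 2)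
    (hcomm : ∀ x y, mul x y = mul y x)
    (hassoc : ∀ x y z, mul (mul x y) z = mul x (mul y z)) (he : e ≠ 0) (hf : f ≠ 0)
    (hee : mul e e = e) (hef : mul e f = 0) :
    HasStructureConstants mul 0 ![![![1, 0], 0], ![0, ![0, 1]]] 0 ∨
      HasStructureConstants mul 0 ![![![1, 0], 0], ![0, 0]] 0 := by
  have he' : mul e e ≠ 0 := by rwa [hee]
  obtain ⟨s, hff⟩ : ∃ s : K, mul f f = s • f :=
    exists_eq_smul_of_map_eq_zero hdim (mul e) he' hf hef (by rw [← hassoc, hef]; simp)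
  have hfe : mul f e = 0 := by rw [hcomm, hef]
  by_cases hs : s = 0
  · exact .inr (hasStructureConstants_of_pair hdim
      (linearIndependent_pair_of_map (mul e) he' hf hef)
      (by simp [Fin.forall_fin_two, hee, hef, hfe, hff, hs]) (by simp))
  · exact .inl (hasStructureConstants_of_pair hdim (f := s⁻¹ • f)
      (linearIndependent_pair_of_map (mul e) he' (by simp [hs, hf]) (by simp [hef]))
      (by simp [Fin.forall_fin_two, hee, hef, hfe, hff, hs]) (by simp))

theorem hasStructureConstants_of_dual_numbers [NeZero (2 : K)] (hdim : finrank K T = 2)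
    (hcomm : ∀ x y, mul x y = mul y x) (hD : IsHalfDerivation br (mul f))
    (hcube : br e (br e e) = 0) (hf : f ≠ 0) (hee : mul e e = e) (hef : mul e f = f)
    (hff : mul f f = 0) :
    HasStructureConstants mul br ![![![1, 0], ![0, 1]], ![![0, 1], 0]]
        ![![![0, 1], 0], ![0, 0]] ∨
      ∃ α : K, HasStructureConstants mul br ![![![1, 0], ![0, 1]], ![![0, 1], 0]]
        ![![0, ![0, α]], ![![0, -α], 0]] := by
  have hfe : mul f e = f := by rw [hcomm, hef]
  have hl : LinearIndependent K ![e, f] :=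
    linearIndependent_pair_of_map (mul f) (by rwa [hfe]) hf hff
  obtain ⟨b, d, hbee, hbef, hbfe, hbff, hbd⟩ := hD.exists_bracket_of_sq_zero hdim hcube hf hfe hff
  by_cases hb : b = 0
  · exact .inr ⟨d, hasStructureConstants_of_pair hdim hl
      (by simp [Fin.forall_fin_two, hee, hef, hfe, hff])
      (by simp [Fin.forall_fin_two, hbee, hbef, hbfe, hbff, hb])⟩
  · have hd : d = 0 := hbd.resolve_left hb
    exact .inl (hasStructureConstants_of_pair hdim
      (linearIndependent_pair_of_map (f := b • f) (mul f) (by rwa [hfe]) (by simp [hb, hf])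
        (by simp [hff]))
      (by simp [Fin.forall_fin_two, hee, hef, hfe, hff])
      (by simp [Fin.forall_fin_two, hbee, hbef, hbfe, hbff, hd]))

theorem hasStructureConstants_of_nilpotent [NeZero (2 : K)] (hdim : finrank K T = 2)
    (hcomm : ∀ x y, mul x y = mul y x)
    (hassoc : ∀ x y z, mul (mul x y) z = mul x (mul y z)) (hD : IsHalfDerivation br (mul e))
    (hcube : br e (br e e) = 0) (hl : LinearIndependent K ![e, mul e e])
    (hef : mul e (mul e e) = 0) :
    (∃ α : K, HasStructureConstants mul br ![![![0, 1], 0], ![0, 0]]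
        ![![![0, α], 0], ![0, 0]]) ∨
      HasStructureConstants mul br ![![![0, 1], 0], ![0, 0]]
        ![![0, ![0, 1]], ![![0, -1], 0]] := by
  obtain ⟨f, hee⟩ : ∃ f, mul e e = f := ⟨_, rfl⟩
  rw [hee] at hl hef
  have hfe : mul f e = 0 := by rw [hcomm, hef]
  have hff : mul f f = 0 := by rw [← hee, hassoc, hee, hef, map_zero]
  have hf : f ≠ 0 := hl.ne_zero 1
  obtain ⟨b, d, hbee, hbef, hbfe, hbff, hbd⟩ := hD.exists_bracket_of_sq_zero hdim hcube hf hee hef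
  by_cases hd : d = 0
  · exact .inl ⟨b, hasStructureConstants_of_pair hdim hl
      (by simp [Fin.forall_fin_two, hee, hef, hfe, hff])
      (by simp [Fin.forall_fin_two, hbee, hbef, hbfe, hbff, hd])⟩
  · have hb : b = 0 := hbd.resolve_right hd
    have hl' : LinearIndependent K ![d⁻¹ • e, (d⁻¹ * d⁻¹) • f] :=
      (LinearIndependent.pair_smul_smul_iff (.mk0 _ (by simp [hd])) (.mk0 _ (by simp [hd]))).mpr hl
    exact .inr (hasStructureConstants_of_pair hdim hl'
      (by simp [Fin.forall_fin_two, hee, hef, hfe, hff, smul_smul])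
      (by simp [Fin.forall_fin_two, hbee, hbef, hbfe, hbff, hb, hd, smul_smul]))

-- The alternatives are listed in the order T1, T2, T3, T4, T5, T6, T7, T8 of the paper.
theorem statement7_general [NeZero (2 : K)] (hsq : ∀ a : K, IsSquare a) (hdim : finrank K T = 2)
    (hcomm : ∀ x y, mul x y = mul y x)
    (hassoc : ∀ x y z, mul (mul x y) z = mul x (mul y z)) (hleib : IsSymmLeibniz br)
    (hcompat : ∀ x y z, (2 : K) • mul (br x y) z = br (mul x z) y + br x (mul y z))
    (hnz : (∃ x y, mul x y ≠ 0) ∨ ∃ x y, br x y ≠ 0) :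
    HasStructureConstants mul br 0 ![![![0, 1], 0], ![0, 0]] ∨
    HasStructureConstants mul br 0 ![![0, ![0, 1]], ![![0, -1], 0]] ∨
    HasStructureConstants mul br ![![![1, 0], 0], ![0, ![0, 1]]] 0 ∨
    HasStructureConstants mul br ![![![1, 0], ![0, 1]], ![![0, 1], 0]]
      ![![![0, 1], 0], ![0, 0]] ∨
    (∃ α : K, HasStructureConstants mul br ![![![1, 0], ![0, 1]], ![![0, 1], 0]]
      ![![0, ![0, α]], ![![0, -α], 0]]) ∨
    HasStructureConstants mul br ![![![1, 0], 0], ![0, 0]] 0 ∨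
    (∃ α : K, HasStructureConstants mul br ![![![0, 1], 0], ![0, 0]]
      ![![![0, α], 0], ![0, 0]]) ∨
    HasStructureConstants mul br ![![![0, 1], 0], ![0, 0]]
      ![![0, ![0, 1]], ![![0, -1], 0]] := by
  have hD (z : T) : IsHalfDerivation br (mul z) := fun x y => by
    simpa only [hcomm z] using hcompat x y z
  have hcube := hleib.apply_apply_self
  by_cases hmul : mul = 0
  · subst hmul
    have hbr : br ≠ 0 := by
      rintro rfl
      simp at hnz
    exact (hasStructureConstants_of_mul_eq_zero hdim hleib hbr).imp_right .inl
  obtain ⟨x, hx⟩ := exists_mul_self_ne_zero hcomm hmul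
  rcases exists_mul_self_eq_smul_or_mul_mul_self_eq_zero hdim hcomm hassoc hx with
    ⟨a, ha, y, hy, hyy⟩ | ⟨hl, hxxx⟩
  · rcases exists_sq_zero_or_idempotent_mul_eq_zero_of_idempotent hsq hdim hcomm hassoc
        (smul_ne_zero (inv_ne_zero ha) hy) (inv_smul_mul_self ha hyy) with
      ⟨e, f, he, hf, hee, hef⟩ | ⟨e, n, -, hn, hee, hen, hnn⟩
    · obtain rfl : br = 0 := (hD e).eq_zero_of_projection hdim hcube he hf hee hef
      have := hasStructureConstants_of_idempotent_mul_eq_zero hdim hcomm hassoc he hf hee hef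
      tauto
    · have := hasStructureConstants_of_dual_numbers hdim hcomm (hD n) (hcube e) hn hee hen hnn
      tauto
  · have := hasStructureConstants_of_nilpotent hdim hcomm hassoc (hD x) (hcube x) hl hxxx
    tauto

end Field

theorem zm_eq_tm_zero : zm = tm 0 := by
  funext x y
  simp [zm, tm]

theorem forall_equivFun_eq_tm_iff {T : Type*} [AddCommGroup T] [Module ℂ T]
    (m : T →ₗ[ℂ] T →ₗ[ℂ] T) (b : Basis (Fin 2) ℂ T) (c : Fin 2 → Fin 2 → V2) :
    (∀ x y, b.equivFun (m x y) = tm c (b.equivFun x) (b.equivFun y)) ↔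
      ∀ i j, m (b i) (b j) = ∑ k, c i j k • b k := by
  constructor
  · intro h i j
    rw [← b.sum_equivFun (m (b i) (b j)), h]
    fin_cases i <;> fin_cases j <;> simp [tm]
  · intro h x y
    have hbasis (i j : Fin 2) : b.equivFun (m (b i) (b j)) = c i j := by
      rw [h, ← b.equivFun_symm_apply, LinearEquiv.apply_symm_apply]
    conv_lhs => rw [← b.sum_equivFun x, ← b.sum_equivFun y]
    simp only [map_sum, map_smul, LinearMap.sum_apply, LinearMap.smul_apply, hbasis, tm,
      smul_smul, Finset.smul_sum]
    rw [Finset.sum_comm]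
    simp only [mul_comm]

theorem iso2_tm_iff_hasStructureConstants {T : Type*} [AddCommGroup T] [Module ℂ T]
    {mul br : T →ₗ[ℂ] T →ₗ[ℂ] T} {c d : Fin 2 → Fin 2 → V2} :
    Iso2 (fun x y => mul x y) (fun x y => br x y) (tm c) (tm d) ↔
      HasStructureConstants mul br c d := by
  constructor
  · rintro ⟨φ, hmul, hbr⟩
    have hφ : (Basis.ofEquivFun φ).equivFun = φ := Basis.equivFun_ofEquivFun φ
    rw [← hφ] at hmul hbr
    exact ⟨Basis.ofEquivFun φ, fun i j => ⟨(forall_equivFun_eq_tm_iff _ _ _).mp hmul i j,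
      (forall_equivFun_eq_tm_iff _ _ _).mp hbr i j⟩⟩
  · rintro ⟨b, h⟩
    exact ⟨b.equivFun, (forall_equivFun_eq_tm_iff _ _ _).mpr fun i j => (h i j).1,
      (forall_equivFun_eq_tm_iff _ _ _).mpr fun i j => (h i j).2⟩

/-- Every nonzero 2-dimensional transposed Leibniz–Poisson algebra over
ℂ is isomorphic to one of T1, T2 (with `· ≡ 0`), T3, T4, T5^α, T6, T7^α, T8. -/
theorem statement7 (T : Type*) [AddCommGroup T] [Module ℂ T]
    (hdim : Module.finrank ℂ T = 2)
    (mul br : T →ₗ[ℂ] T →ₗ[ℂ] T)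
    (hcomm : ∀ x y : T, mul x y = mul y x)
    (hassoc : ∀ x y z : T, mul (mul x y) z = mul x (mul y z))
    (hleib₁ : ∀ x y z : T, br (br x y) z = br (br x z) y + br x (br y z))
    (hleib₂ : ∀ x y z : T, br x (br y z) = br (br x y) z + br y (br x z))
    (hcompat : ∀ x y z : T, (2 : ℂ) • mul (br x y) z = br (mul x z) y + br x (mul y z))
    (hnz : (∃ x y : T, mul x y ≠ 0) ∨ (∃ x y : T, br x y ≠ 0)) :
    -- T1
    Iso2 (fun x y => mul x y) (fun x y => br x y) zm (tm (tbl ![0,1] 0 0 0)) ∨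
    -- T2
    Iso2 (fun x y => mul x y) (fun x y => br x y) zm (tm (tbl 0 ![0,1] ![0,-1] 0)) ∨
    -- T3
    Iso2 (fun x y => mul x y) (fun x y => br x y) (tm cA01) zm ∨
    -- T4
    Iso2 (fun x y => mul x y) (fun x y => br x y) (tm cA02) (tm (tbl ![0,1] 0 0 0)) ∨
    -- T5^α
    (∃ α : ℂ, Iso2 (fun x y => mul x y) (fun x y => br x y)
      (tm cA02) (tm (tbl 0 ![0,α] ![0,-α] 0))) ∨
    -- T6
    Iso2 (fun x y => mul x y) (fun x y => br x y) (tm cA03) zm ∨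
    -- T7^α
    (∃ α : ℂ, Iso2 (fun x y => mul x y) (fun x y => br x y)
      (tm cA04) (tm (tbl ![0,α] 0 0 0))) ∨
    -- T8
    Iso2 (fun x y => mul x y) (fun x y => br x y) (tm cA04) (tm (tbl 0 ![0,1] ![0,-1] 0)) := by
  simpa only [zm_eq_tm_zero, iso2_tm_iff_hasStructureConstants, cA01, cA02, cA03, cA04, tbl] using
    statement7_general IsAlgClosed.exists_eq_mul_self hdim hcomm hassoc ⟨hleib₁, hleib₂⟩ hcompat hnz
end
end

section
/- Every nonzero 2-dimensional Novikov algebra over ℂ is isomorphic to exactly one of the following algebras, given by a multiplication table on a basis e1, e2 (all unlisted products of basis elements are zero): N01: e1∘e1 = e2; N02: e2∘e1 = −e1; N03: e1∘e1 = e1, e2∘e2 = e2; N04: e1∘e1 = e1; N05: e1∘e2 = e1, e2∘e2 = e1 + e2; N06^γ (γ ∈ ℂ): e1∘e2 = e1, e2∘e1 = γ·e1, e2∘e2 = e2. These algebras are pairwise non-isomorphic, and N06^γ ≅ N06^δ only if γ = δ. -/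
noncomputable section

/-- The nonzero 2-dimensional Novikov algebras N01–N05 and the family N06^γ,
indexed by `Fin 5 ⊕ ℂ`. -/
def novAlg : Fin 5 ⊕ ℂ → Fin 2 → Fin 2 → V2
  | Sum.inl i => ![tbl ![0,1] 0 0 0,          -- N01
                   tbl 0 0 ![-1,0] 0,         -- N02
                   tbl ![1,0] 0 0 ![0,1],     -- N03
                   tbl ![1,0] 0 0 0,          -- N04
                   tbl 0 ![1,0] 0 ![1,1]] i   -- N05
  | Sum.inr γ => tbl 0 ![1,0] ![γ,0] ![0,1]   -- N06^γ

/-! In a Novikov algebra the right multiplications commute, so in dimension two they share an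
eigenvector `v`, and completing it to a basis makes them all upper triangular. If the two diagonal
weights differ, the right multiplications are simultaneously diagonalizable, and left symmetry makes
the algebra a direct sum of two one-dimensional ideals. If they agree, left symmetry forces the
weight to vanish at `v`, unless every right multiplication is scalar, where `v` can be replaced by a
vector on which the weight does vanish. In both cases a change of `w` and rescaling give the table.
The algebras are separated by nonzero idempotents, square-zero elements, left annihilators and
commutativity; in N06^γ the parameter is the factor relating `y ∘ x` to `x ∘ y` when `x ∘ x = 0`. -/

section CommutingFamily

variable {ι K V : Type*} [Field K] [AddCommGroup V] [Module K V] {f : ι → Module.End K V}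

theorem exists_common_eigenvector [IsAlgClosed K] [FiniteDimensional K V] [Nontrivial V]
    (hf : ∀ i j, Commute (f i) (f j)) : ∃ v ≠ 0, ∀ i, ∃ a : K, f i v = a • v := by
  induction hn : Module.finrank K V using Nat.strong_induction_on generalizing V with
  | _ n ih =>
    by_cases hscalar : ∀ i, ∃ a : K, ∀ v, f i v = a • v
    · obtain ⟨v, hv⟩ := exists_ne (0 : V)
      exact ⟨v, hv, fun i => (hscalar i).imp fun a ha => ha v⟩
    · push Not at hscalar
      obtain ⟨i, hi⟩ := hscalar
      obtain ⟨a, ha⟩ := Module.End.exists_eigenvalue (f i)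
      have hne : (f i).eigenspace a ≠ ⊤ := by
        obtain ⟨v, hv⟩ := hi a
        refine fun htop => hv ?_
        rw [← Module.End.mem_eigenspace_iff, htop]
        exact Submodule.mem_top
      have : Nontrivial ((f i).eigenspace a) := Submodule.nontrivial_iff_ne_bot.mpr ha
      have hmaps j := Module.End.mapsTo_genEigenspace_of_comm (hf i j) a 1
      obtain ⟨v, hv, hev⟩ := ih _ (hn ▸ Submodule.finrank_lt hne)
        (f := fun j => (f j).restrict (hmaps j))
        (fun j k => LinearMap.ext fun x => Subtype.ext (LinearMap.congr_fun (hf j k) x)) rfl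
      exact ⟨v, by simpa using hv, fun j => (hev j).imp fun b hb => congrArg Subtype.val hb⟩

theorem exists_add_smul_common_eigenvector (hf : ∀ i j, Commute (f i) (f j)) {v w : V}
    {a b c : ι → K} (hvw : LinearIndependent K ![v, w]) (hv : ∀ i, f i v = a i • v)
    (hw : ∀ i, f i w = c i • v + b i • w) (hab : a ≠ b) :
    ∃ s : K, ∀ i, f i (w + s • v) = b i • (w + s • v) := by
  obtain ⟨i, hi⟩ := Function.ne_iff.mp hab
  have hi' : b i - a i ≠ 0 := sub_ne_zero.mpr hi.symm
  have hoffdiag j : c j * (b i - a i) = c i * (b j - a j) := by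
    have hcomm : f i (f j w) = f j (f i w) := LinearMap.congr_fun (hf i j) w
    simp only [hv, hw, map_add, map_smul] at hcomm
    have hzero : (c j * (b i - a i) - c i * (b j - a j)) • v + (0 : K) • w = 0 := by
      linear_combination (norm := module) -hcomm
    exact sub_eq_zero.mp (LinearIndependent.pair_iff.mp hvw _ _ hzero).1
  refine ⟨c i / (b i - a i), fun j => ?_⟩
  have hj : c j = c i / (b i - a i) * (b j - a j) := by
    rw [div_mul_eq_mul_div, eq_div_iff hi', hoffdiag]
  rw [map_add, map_smul, hv, hw, hj]
  module

theorem exists_triangular_pair [IsAlgClosed K] (hdim : Module.finrank K V = 2)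
    (hf : ∀ i j, Commute (f i) (f j)) :
    ∃ v w : V, LinearIndependent K ![v, w] ∧ ∃ a b c : ι → K,
      (∀ i, f i v = a i • v) ∧ ∀ i, f i w = c i • v + b i • w := by
  have : FiniteDimensional K V := Module.finite_of_finrank_eq_succ hdim
  have : Nontrivial V := Module.nontrivial_of_finrank_eq_succ hdim
  obtain ⟨v, hv, hev⟩ := exists_common_eigenvector hf
  obtain ⟨w, hvw⟩ := exists_linearIndependent_pair_of_one_lt_finrank (R := K) (by omega) hv
  have hspan y : ∃ s t : K, s • v + t • w = y := by
    rw [← Submodule.mem_span_pair, ← Matrix.range_cons_cons_empty v w ![],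
      hvw.span_eq_top_of_card_eq_finrank (by simp [hdim])]
    exact Submodule.mem_top
  choose a ha using hev
  choose c b hcb using fun i => hspan (f i w)
  exact ⟨v, w, hvw, a, b, c, ha, fun i => (hcb i).symm⟩

theorem exists_diagonal_or_equal_weights [IsAlgClosed K] (hdim : Module.finrank K V = 2)
    (hf : ∀ i j, Commute (f i) (f j)) :
    ∃ v w : V, LinearIndependent K ![v, w] ∧ ∃ a b c : ι → K,
      (∀ i, f i v = a i • v) ∧ (∀ i, f i w = c i • v + b i • w) ∧ (c = 0 ∨ a = b) := by
  obtain ⟨v, w, hvw, a, b, c, hv, hw⟩ := exists_triangular_pair hdim hf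
  by_cases hab : a = b
  · exact ⟨v, w, hvw, a, b, c, hv, hw, .inr hab⟩
  · obtain ⟨s, hs⟩ := exists_add_smul_common_eigenvector hf hvw hv hw hab
    exact ⟨v, w + s • v, by simpa [add_comm w] using hvw, a, b, 0, hv,
      fun i => by simpa using hs i, .inl rfl⟩

end CommutingFamily

section LeftSymmetric

variable {K V : Type*} [Field K] [AddCommGroup V] [Module K V] {circ : V →ₗ[K] V →ₗ[K] V}

/-- Left symmetry of a bilinear product: its associator is symmetric in the first two arguments.
Together with commutation of the right multiplications this is the Novikov condition. -/
def IsLeftSymmetric (circ : V →ₗ[K] V →ₗ[K] V) : Prop :=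
  ∀ x y z, circ (circ x y) z - circ x (circ y z) = circ (circ y x) z - circ y (circ x z)

/-- The product is the direct sum of two one-dimensional ideals, spanned by `v` and `w`, with
`v ∘ v = a v` and `w ∘ w = d w`. -/
structure IsSplitForm (circ : V →ₗ[K] V →ₗ[K] V) (v w : V) (a d : K) : Prop where
  linearIndependent : LinearIndependent K ![v, w]
  left_left : circ v v = a • v
  left_right : circ v w = 0
  right_left : circ w v = 0
  right_right : circ w w = d • w

/-- The product for which every right multiplication has a single eigenvalue and the common
eigenvector `v` squares to zero: the eigenvalue is `0` for right multiplication by `v`, and `b` for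
right multiplication by `w`. -/
structure IsJordanForm (circ : V →ₗ[K] V →ₗ[K] V) (v w : V) (b c d : K) : Prop where
  linearIndependent : LinearIndependent K ![v, w]
  left_left : circ v v = 0
  left_right : circ v w = b • v
  right_left : circ w v = c • v
  right_right : circ w w = d • v + b • w

variable {v w : V}

theorem IsLeftSymmetric.diagonal_coeffs (h : IsLeftSymmetric circ)
    (hvw : LinearIndependent K ![v, w]) {a b c d : K} (hvv : circ v v = a • v)
    (hvw' : circ v w = b • v) (hwv : circ w v = c • w) (hww : circ w w = d • w) :
    (b = 0 ∧ c = 0) ∨ (a = c ∧ b = d) := by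
  have hv := h v w v
  have hw := h w v w
  simp only [hvv, hvw', hwv, hww, map_smul, LinearMap.smul_apply] at hv hw
  have hv₀ : (b * (a - c)) • v + (c * (a - c)) • w = 0 := by
    linear_combination (norm := module) hv
  have hw₀ : (b * (d - b)) • v + (c * (d - b)) • w = 0 := by
    linear_combination (norm := module) hw
  obtain ⟨hba, hca⟩ : b * (a - c) = 0 ∧ c * (a - c) = 0 := LinearIndependent.pair_iff.mp hvw _ _ hv₀
  obtain ⟨hbd, hcd⟩ : b * (d - b) = 0 ∧ c * (d - b) = 0 := LinearIndependent.pair_iff.mp hvw _ _ hw₀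
  grind

theorem IsLeftSymmetric.jordan_coeffs [NeZero (2 : K)] (h : IsLeftSymmetric circ)
    (hvw : LinearIndependent K ![v, w]) {a b c d : K} (hvv : circ v v = a • v)
    (hvw' : circ v w = b • v) (hwv : circ w v = c • v + a • w)
    (hww : circ w w = d • v + b • w) :
    a = 0 ∨ (c = 0 ∧ d = 0) := by
  have hv := h v w v
  have hw := h v w w
  simp only [hvv, hvw', hwv, hww, map_add, map_smul, LinearMap.add_apply,
    LinearMap.smul_apply] at hv hw
  have hv₀ : (2 * a * c) • v + (0 : K) • w = 0 := by linear_combination (norm := module) -hv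
  have hw₀ : (2 * a * d) • v + (0 : K) • w = 0 := by linear_combination (norm := module) -hw
  have hac : 2 * a * c = 0 := (LinearIndependent.pair_iff.mp hvw _ _ hv₀).1
  have had : 2 * a * d = 0 := (LinearIndependent.pair_iff.mp hvw _ _ hw₀).1
  simp only [mul_eq_zero, two_ne_zero, false_or] at hac had
  tauto

/-- The product is `x ∘ y = ℓ(y) x` with `ℓ` linear; the new first vector is taken in `ker ℓ`. -/
theorem exists_isJordanForm_of_scalar (hvw : LinearIndependent K ![v, w]) {a b : K}
    (hvv : circ v v = a • v) (hvw' : circ v w = b • v) (hwv : circ w v = a • w)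
    (hww : circ w w = b • w) : ∃ v' w' : V, ∃ e : K, IsJordanForm circ v' w' e 0 0 := by
  by_cases ha : a = 0
  · subst ha
    exact ⟨v, w, b, hvw, by simpa using hvv, hvw', by simpa using hwv, by simpa using hww⟩
  refine ⟨b • v + (-a) • w, (1 : K) • v + (0 : K) • w, a, ?_, ?_, ?_, ?_, ?_⟩
  · exact (LinearIndependent.pair_add_smul_add_smul_iff ..).mpr ⟨hvw, by simpa using ha⟩
  all_goals
    simp only [map_add, map_smul, LinearMap.add_apply, LinearMap.smul_apply, hvv, hvw', hwv, hww]
    module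

theorem IsLeftSymmetric.exists_isSplitForm_or_isJordanForm [IsAlgClosed K] [NeZero (2 : K)]
    (hdim : Module.finrank K V = 2) (h : IsLeftSymmetric circ)
    (hcomm : ∀ x y z, circ (circ x y) z = circ (circ x z) y) :
    (∃ v w : V, ∃ a d : K, IsSplitForm circ v w a d) ∨
      ∃ v w : V, ∃ b c d : K, IsJordanForm circ v w b c d := by
  obtain ⟨v, w, hvw, a, b, c, hv, hw, rfl | rfl⟩ :=
    exists_diagonal_or_equal_weights (f := circ.flip) hdim
      fun y z => LinearMap.ext fun x => hcomm x z y
  all_goals simp only [LinearMap.flip_apply, Pi.zero_apply, zero_smul, zero_add] at hv hw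
  · rcases h.diagonal_coeffs hvw (hv v) (hv w) (hw v) (hw w) with ⟨hb, hc⟩ | ⟨hac, hbd⟩
    · exact .inl ⟨v, w, a v, b w, hvw, hv v, by simp [hv, hb], by simp [hw, hc], hw w⟩
    · obtain ⟨v', w', e, he⟩ := exists_isJordanForm_of_scalar hvw (hv v) (hv w)
        (by rw [hw, hac]) (by rw [hw, hbd])
      exact .inr ⟨v', w', e, 0, 0, he⟩
  · rcases h.jordan_coeffs hvw (hv v) (hv w) (hw v) (hw w) with ha | ⟨hc, hd⟩
    · exact .inr ⟨v, w, a w, c v, c w, hvw, by simp [hv, ha], hv w, by simp [hw, ha], hw w⟩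
    · obtain ⟨v', w', e, he⟩ := exists_isJordanForm_of_scalar hvw (hv v) (hv w)
        (by simp [hw, hc]) (by simp [hw, hd])
      exact .inr ⟨v', w', e, 0, 0, he⟩

theorem eq_zero_of_apply_pair_eq_zero (hdim : Module.finrank K V = 2)
    (hvw : LinearIndependent K ![v, w]) (hvv : circ v v = 0) (hvw' : circ v w = 0)
    (hwv : circ w v = 0) (hww : circ w w = 0) : circ = 0 := by
  let e := basisOfLinearIndependentOfCardEqFinrank hvw (by simp [hdim])
  refine e.ext fun i => e.ext fun j => ?_
  fin_cases i <;> fin_cases j <;> simp [e, hvv, hvw', hwv, hww]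

end LeftSymmetric

section NormalForms

variable {N : Type*} [AddCommGroup N] [Module ℂ N] {circ : N →ₗ[ℂ] N →ₗ[ℂ] N} {v w : N}

theorem tm_tbl_apply (p q r s x y : V2) :
    tm (tbl p q r s) x y =
      (x 0 * y 0) • p + (x 0 * y 1) • q + (x 1 * y 0) • r + (x 1 * y 1) • s := by
  simp [tm, tbl, add_assoc]

theorem iso1_tm_tbl (hdim : Module.finrank ℂ N = 2) (hvw : LinearIndependent ℂ ![v, w])
    {p q r s : V2} (hvv : circ v v = p 0 • v + p 1 • w) (hvw' : circ v w = q 0 • v + q 1 • w)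
    (hwv : circ w v = r 0 • v + r 1 • w) (hww : circ w w = s 0 • v + s 1 • w) :
    Iso1 (fun x y => circ x y) (tm (tbl p q r s)) := by
  let e := basisOfLinearIndependentOfCardEqFinrank hvw (by simp [hdim])
  let ψ := e.equivFun.symm
  have hψ (p : V2) : ψ p = p 0 • v + p 1 • w := by
    simp [ψ, e, Module.Basis.equivFun_symm_apply]
  refine ⟨ψ.symm, fun x y => ?_⟩
  obtain ⟨x, rfl⟩ := ψ.surjective x
  obtain ⟨y, rfl⟩ := ψ.surjective y
  rw [ψ.symm_apply_apply, ψ.symm_apply_apply, ψ.symm_apply_eq, tm_tbl_apply]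
  simp only [hψ, map_add, map_smul, LinearMap.add_apply, LinearMap.smul_apply, hvv, hvw', hwv, hww,
    Pi.add_apply, Pi.smul_apply, smul_eq_mul]
  module

theorem IsSplitForm.symm {a d : ℂ} (h : IsSplitForm circ v w a d) : IsSplitForm circ w v d a :=
  ⟨LinearIndependent.pair_symm_iff.mp h.linearIndependent, h.right_right, h.right_left,
    h.left_right, h.left_left⟩

theorem IsSplitForm.iso1_novAlg_two (hdim : Module.finrank ℂ N = 2) {a d : ℂ}
    (h : IsSplitForm circ v w a d) (ha : a ≠ 0) (hd : d ≠ 0) :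
    Iso1 (fun x y => circ x y) (tm (novAlg (.inl 2))) := by
  refine iso1_tm_tbl (v := a⁻¹ • v) (w := d⁻¹ • w) hdim
    ((LinearIndependent.pair_smul_smul_iff (inv_ne_zero ha).isUnit (inv_ne_zero hd).isUnit).mpr
      h.linearIndependent) ?_ ?_ ?_ ?_
  all_goals simp [h.left_left, h.left_right, h.right_left, h.right_right, ha, hd]

theorem IsSplitForm.iso1_novAlg_three (hdim : Module.finrank ℂ N = 2) {a : ℂ}
    (h : IsSplitForm circ v w a 0) (ha : a ≠ 0) :
    Iso1 (fun x y => circ x y) (tm (novAlg (.inl 3))) := by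
  refine iso1_tm_tbl (v := a⁻¹ • v) (w := (1 : ℂ) • w) hdim
    ((LinearIndependent.pair_smul_smul_iff (inv_ne_zero ha).isUnit isUnit_one).mpr
      h.linearIndependent) ?_ ?_ ?_ ?_
  all_goals simp [h.left_left, h.left_right, h.right_left, h.right_right, ha]

theorem IsSplitForm.exists_iso1_novAlg (hdim : Module.finrank ℂ N = 2) (hcirc : circ ≠ 0)
    {a d : ℂ} (h : IsSplitForm circ v w a d) :
    ∃ i, Iso1 (fun x y => circ x y) (tm (novAlg i)) := by
  by_cases ha : a = 0 <;> by_cases hd : d = 0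
  · subst ha hd
    exact absurd (eq_zero_of_apply_pair_eq_zero hdim h.linearIndependent
      (by simp [h.left_left]) h.left_right h.right_left (by simp [h.right_right])) hcirc
  · subst ha
    exact ⟨_, h.symm.iso1_novAlg_three hdim hd⟩
  · subst hd
    exact ⟨_, h.iso1_novAlg_three hdim ha⟩
  · exact ⟨_, h.iso1_novAlg_two hdim ha hd⟩

section Jordan

variable {b c d : ℂ}

theorem IsJordanForm.add_smul_right (h : IsJordanForm circ v w b c d) (s : ℂ) :
    IsJordanForm circ v (w + s • v) b c (d + s * c) where
  linearIndependent := by simpa [add_comm w] using h.linearIndependent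
  left_left := h.left_left
  left_right := by simp [h.left_left, h.left_right]
  right_left := by simp [h.left_left, h.right_left]
  right_right := by
    simp only [map_add, map_smul, LinearMap.add_apply, LinearMap.smul_apply, h.left_left,
      h.left_right, h.right_left, h.right_right]
    module

theorem IsJordanForm.iso1_novAlg_zero (hdim : Module.finrank ℂ N = 2)
    (h : IsJordanForm circ v w 0 0 d) (hd : d ≠ 0) :
    Iso1 (fun x y => circ x y) (tm (novAlg (.inl 0))) := by
  refine iso1_tm_tbl (v := (1 : ℂ) • w) (w := d • v) hdim
    ((LinearIndependent.pair_smul_smul_iff isUnit_one hd.isUnit).mpr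
      (LinearIndependent.pair_symm_iff.mp h.linearIndependent)) ?_ ?_ ?_ ?_
  all_goals simp [h.left_left, h.left_right, h.right_left, h.right_right]

theorem IsJordanForm.iso1_novAlg_one (hdim : Module.finrank ℂ N = 2)
    (h : IsJordanForm circ v w 0 c 0) (hc : c ≠ 0) :
    Iso1 (fun x y => circ x y) (tm (novAlg (.inl 1))) := by
  refine iso1_tm_tbl (v := (1 : ℂ) • v) (w := (-c⁻¹) • w) hdim
    ((LinearIndependent.pair_smul_smul_iff isUnit_one (by simpa using hc)).mpr
      h.linearIndependent) ?_ ?_ ?_ ?_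
  all_goals simp [h.left_left, h.left_right, h.right_left, h.right_right, hc]

theorem IsJordanForm.iso1_novAlg_four (hdim : Module.finrank ℂ N = 2)
    (h : IsJordanForm circ v w b 0 d) (hb : b ≠ 0) (hd : d ≠ 0) :
    Iso1 (fun x y => circ x y) (tm (novAlg (.inl 4))) := by
  refine iso1_tm_tbl (v := (d / b ^ 2) • v) (w := b⁻¹ • w) hdim
    ((LinearIndependent.pair_smul_smul_iff (by simp [hb, hd]) (by simpa using hb)).mpr
      h.linearIndependent) ?_ ?_ ?_ ?_
  · simp [h.left_left]
  · simp [h.left_right, smul_comm _ b, hb]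
  · simp [h.right_left]
  · simp only [map_smul, LinearMap.smul_apply, h.right_right, Matrix.cons_val_zero,
      Matrix.cons_val_one]
    match_scalars <;> field_simp

theorem IsJordanForm.iso1_novAlg_inr (hdim : Module.finrank ℂ N = 2)
    (h : IsJordanForm circ v w b c 0) (hb : b ≠ 0) :
    Iso1 (fun x y => circ x y) (tm (novAlg (.inr (c / b)))) := by
  refine iso1_tm_tbl (v := (1 : ℂ) • v) (w := b⁻¹ • w) hdim
    ((LinearIndependent.pair_smul_smul_iff isUnit_one (by simpa using hb)).mpr
      h.linearIndependent) ?_ ?_ ?_ ?_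
  all_goals simp [h.left_left, h.left_right, h.right_left, h.right_right, hb, smul_smul,
    div_eq_inv_mul]

theorem IsJordanForm.exists_iso1_novAlg_of_right_right (hdim : Module.finrank ℂ N = 2)
    (hcirc : circ ≠ 0) (h : IsJordanForm circ v w b c 0) :
    ∃ i, Iso1 (fun x y => circ x y) (tm (novAlg i)) := by
  by_cases hb : b = 0
  · subst hb
    have hc : c ≠ 0 := by
      rintro rfl
      exact hcirc (eq_zero_of_apply_pair_eq_zero hdim h.linearIndependent h.left_left
        (by simp [h.left_right]) (by simp [h.right_left]) (by simp [h.right_right]))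
    exact ⟨_, h.iso1_novAlg_one hdim hc⟩
  · exact ⟨_, h.iso1_novAlg_inr hdim hb⟩

theorem IsJordanForm.exists_iso1_novAlg (hdim : Module.finrank ℂ N = 2) (hcirc : circ ≠ 0)
    (h : IsJordanForm circ v w b c d) : ∃ i, Iso1 (fun x y => circ x y) (tm (novAlg i)) := by
  by_cases hd : d = 0
  · subst hd
    exact h.exists_iso1_novAlg_of_right_right hdim hcirc
  by_cases hc : c = 0
  · subst hc
    by_cases hb : b = 0
    · subst hb
      exact ⟨_, h.iso1_novAlg_zero hdim hd⟩
    · exact ⟨_, h.iso1_novAlg_four hdim hb hd⟩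
  · have hcompleted := h.add_smul_right (-d / c)
    rw [div_mul_cancel₀ _ hc, add_neg_cancel] at hcompleted
    exact hcompleted.exists_iso1_novAlg_of_right_right hdim hcirc

end Jordan

end NormalForms

section Invariants

/-- Existence of a nonzero idempotent. -/
def HasIdempotent {A : Type*} [Zero A] (μ : A → A → A) : Prop := ∃ e, e ≠ 0 ∧ μ e e = e

/-- Existence of a nonzero element whose square is zero. -/
def HasSquareZero {A : Type*} [Zero A] (μ : A → A → A) : Prop := ∃ x, x ≠ 0 ∧ μ x x = 0

/-- Existence of a nonzero element `x` such that all products `x ∘ y` are zero. -/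
def HasLeftAnnihilator {A : Type*} [Zero A] (μ : A → A → A) : Prop :=
  ∃ x, x ≠ 0 ∧ ∀ y, μ x y = 0

/-- Commutativity of a product. -/
def IsCommutative {A : Type*} (μ : A → A → A) : Prop := ∀ x y, μ x y = μ y x

/-- Elements of square zero commute with all others up to the factor `γ`; this recovers the
parameter of the family N06. -/
def SquareZeroTwistCommute {K A : Type*} [Zero A] [SMul K A] (γ : K) (μ : A → A → A) : Prop :=
  ∀ x y, μ x x = 0 → μ y x = γ • μ x y

variable {A B : Type*} [AddCommGroup A] [AddCommGroup B] [Module ℂ A] [Module ℂ B]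
  {μ : A → A → A} {ν : B → B → B}

theorem Iso1.hasIdempotent_iff (h : Iso1 μ ν) : HasIdempotent μ ↔ HasIdempotent ν := by
  obtain ⟨φ, hφ⟩ := h
  exact φ.toEquiv.exists_congr fun x => by simp [← hφ]

theorem Iso1.hasSquareZero_iff (h : Iso1 μ ν) : HasSquareZero μ ↔ HasSquareZero ν := by
  obtain ⟨φ, hφ⟩ := h
  exact φ.toEquiv.exists_congr fun x => by simp [← hφ]

theorem Iso1.hasLeftAnnihilator_iff (h : Iso1 μ ν) :
    HasLeftAnnihilator μ ↔ HasLeftAnnihilator ν := by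
  obtain ⟨φ, hφ⟩ := h
  exact φ.toEquiv.exists_congr fun x => by simp [φ.surjective.forall, ← hφ]

theorem Iso1.isCommutative_iff (h : Iso1 μ ν) : IsCommutative μ ↔ IsCommutative ν := by
  obtain ⟨φ, hφ⟩ := h
  simp [IsCommutative, φ.surjective.forall, ← hφ]

theorem Iso1.squareZeroTwistCommute_iff (h : Iso1 μ ν) (γ : ℂ) :
    SquareZeroTwistCommute γ μ ↔ SquareZeroTwistCommute γ ν := by
  obtain ⟨φ, hφ⟩ := h
  simp [SquareZeroTwistCommute, φ.surjective.forall, ← hφ, ← map_smul]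

end Invariants

section Separation

variable (x y : V2) (γ : ℂ)

theorem tm_novAlg_zero_apply : tm (novAlg (.inl 0)) x y = ![0, x 0 * y 0] := by
  simp [novAlg, tm_tbl_apply]

theorem tm_novAlg_one_apply : tm (novAlg (.inl 1)) x y = ![-(x 1 * y 0), 0] := by
  simp [novAlg, tm_tbl_apply]

theorem tm_novAlg_two_apply : tm (novAlg (.inl 2)) x y = ![x 0 * y 0, x 1 * y 1] := by
  simp [novAlg, tm_tbl_apply]

theorem tm_novAlg_three_apply : tm (novAlg (.inl 3)) x y = ![x 0 * y 0, 0] := by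
  simp [novAlg, tm_tbl_apply]

theorem tm_novAlg_four_apply :
    tm (novAlg (.inl 4)) x y = ![x 0 * y 1 + x 1 * y 1, x 1 * y 1] := by
  simp [novAlg, tm_tbl_apply]

theorem tm_novAlg_inr_apply :
    tm (novAlg (.inr γ)) x y = ![x 0 * y 1 + γ * (x 1 * y 0), x 1 * y 1] := by
  simp [novAlg, tm_tbl_apply, mul_comm]

theorem coords_eq_iff {x y : V2} : x = y ↔ x 0 = y 0 ∧ x 1 = y 1 := by
  simp only [funext_iff, Fin.forall_fin_two]

theorem coords_ne_zero_iff {x : V2} : x ≠ 0 ↔ x 0 ≠ 0 ∨ x 1 ≠ 0 := by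
  simp only [ne_eq, coords_eq_iff, Pi.zero_apply, not_and_or]

variable {i j : Fin 5 ⊕ ℂ}

theorem hasIdempotent_novAlg_iff :
    HasIdempotent (tm (novAlg i)) ↔ i = .inl 2 ∨ i = .inl 3 ∨ i.isRight := by
  match i with
  | .inl 0 =>
    refine iff_of_false ?_ (by simp)
    rintro ⟨e, he, hee⟩
    rw [coords_ne_zero_iff] at he
    have hcoords : 0 = e 0 ∧ e 0 * e 0 = e 1 :=
      coords_eq_iff.mp ((tm_novAlg_zero_apply e e).symm.trans hee)
    grind
  | .inl 1 =>
    refine iff_of_false ?_ (by simp)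
    rintro ⟨e, he, hee⟩
    rw [coords_ne_zero_iff] at he
    have hcoords : -(e 1 * e 0) = e 0 ∧ 0 = e 1 :=
      coords_eq_iff.mp ((tm_novAlg_one_apply e e).symm.trans hee)
    grind
  | .inl 2 => exact iff_of_true ⟨![1, 0], by simp, by simp [tm_novAlg_two_apply]⟩ (by simp)
  | .inl 3 => exact iff_of_true ⟨![1, 0], by simp, by simp [tm_novAlg_three_apply]⟩ (by simp)
  | .inl 4 =>
    refine iff_of_false ?_ (by simp)
    rintro ⟨e, he, hee⟩
    rw [coords_ne_zero_iff] at he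
    have hcoords : e 0 * e 1 + e 1 * e 1 = e 0 ∧ e 1 * e 1 = e 1 :=
      coords_eq_iff.mp ((tm_novAlg_four_apply e e).symm.trans hee)
    grind
  | .inr γ => exact iff_of_true ⟨![0, 1], by simp, by simp [tm_novAlg_inr_apply]⟩ (by simp)

theorem hasSquareZero_novAlg_iff : HasSquareZero (tm (novAlg i)) ↔ i ≠ .inl 2 := by
  match i with
  | .inl 0 => exact iff_of_true ⟨![0, 1], by simp, by simp [tm_novAlg_zero_apply]⟩ (by simp)
  | .inl 1 => exact iff_of_true ⟨![1, 0], by simp, by simp [tm_novAlg_one_apply]⟩ (by simp)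
  | .inl 2 =>
    refine iff_of_false ?_ (by simp)
    rintro ⟨x, hx, hxx⟩
    exact hx (by simpa [tm_novAlg_two_apply, coords_eq_iff] using hxx)
  | .inl 3 => exact iff_of_true ⟨![0, 1], by simp, by simp [tm_novAlg_three_apply]⟩ (by simp)
  | .inl 4 => exact iff_of_true ⟨![1, 0], by simp, by simp [tm_novAlg_four_apply]⟩ (by simp)
  | .inr γ => exact iff_of_true ⟨![1, 0], by simp, by simp [tm_novAlg_inr_apply]⟩ (by simp)

theorem hasLeftAnnihilator_novAlg_iff :
    HasLeftAnnihilator (tm (novAlg i)) ↔ i = .inl 0 ∨ i = .inl 1 ∨ i = .inl 3 := by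
  match i with
  | .inl 0 => exact iff_of_true ⟨![0, 1], by simp, by simp [tm_novAlg_zero_apply]⟩ (by simp)
  | .inl 1 => exact iff_of_true ⟨![1, 0], by simp, by simp [tm_novAlg_one_apply]⟩ (by simp)
  | .inl 2 =>
    refine iff_of_false ?_ (by simp)
    rintro ⟨x, hx, hann⟩
    exact hx (by simpa [tm_novAlg_two_apply, coords_eq_iff] using hann ![1, 1])
  | .inl 3 => exact iff_of_true ⟨![0, 1], by simp, by simp [tm_novAlg_three_apply]⟩ (by simp)
  | .inl 4 =>
    refine iff_of_false ?_ (by simp)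
    rintro ⟨x, hx, hann⟩
    have hcoords : x 0 + x 1 = 0 ∧ x 1 = 0 := by
      simpa [tm_novAlg_four_apply] using hann ![0, 1]
    rw [coords_ne_zero_iff] at hx
    grind
  | .inr γ =>
    refine iff_of_false ?_ (by simp)
    rintro ⟨x, hx, hann⟩
    exact hx (by simpa [tm_novAlg_inr_apply, coords_eq_iff] using hann ![0, 1])

theorem isCommutative_novAlg_inr_iff : IsCommutative (tm (novAlg (.inr γ))) ↔ γ = 1 := by
  constructor
  · intro h
    simpa [tm_novAlg_inr_apply, eq_comm] using h ![1, 0] ![0, 1]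
  · rintro rfl x y
    simp [tm_novAlg_inr_apply, mul_comm, add_comm]

theorem isCommutative_novAlg_iff :
    IsCommutative (tm (novAlg i)) ↔ i = .inl 0 ∨ i = .inl 2 ∨ i = .inl 3 ∨ i = .inr 1 := by
  match i with
  | .inl 0 => exact iff_of_true (fun x y => by simp [tm_novAlg_zero_apply, mul_comm]) (by simp)
  | .inl 1 =>
    exact iff_of_false (fun h => by simpa [tm_novAlg_one_apply] using h ![0, 1] ![1, 0]) (by simp)
  | .inl 2 => exact iff_of_true (fun x y => by simp [tm_novAlg_two_apply, mul_comm]) (by simp)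
  | .inl 3 => exact iff_of_true (fun x y => by simp [tm_novAlg_three_apply, mul_comm]) (by simp)
  | .inl 4 =>
    exact iff_of_false (fun h => by simpa [tm_novAlg_four_apply] using h ![0, 1] ![1, 0]) (by simp)
  | .inr γ => simpa using isCommutative_novAlg_inr_iff γ

theorem squareZeroTwistCommute_novAlg_inr_iff {δ : ℂ} :
    SquareZeroTwistCommute γ (tm (novAlg (.inr δ))) ↔ γ = δ := by
  constructor
  · intro h
    simpa [tm_novAlg_inr_apply, eq_comm] using
      h ![1, 0] ![0, 1] (by simp [tm_novAlg_inr_apply])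
  · rintro rfl x y hxx
    have hx : x 1 = 0 := by
      have hsq := (coords_eq_iff.mp hxx).2
      simpa [tm_novAlg_inr_apply] using hsq
    simp [tm_novAlg_inr_apply, hx, mul_comm]

theorem eq_of_iso1_novAlg (h : Iso1 (tm (novAlg i)) (tm (novAlg j))) : i = j := by
  have hidem := h.hasIdempotent_iff
  have hsq := h.hasSquareZero_iff
  have hann := h.hasLeftAnnihilator_iff
  have hcomm := h.isCommutative_iff
  simp only [hasIdempotent_novAlg_iff, hasSquareZero_novAlg_iff, hasLeftAnnihilator_novAlg_iff,
    isCommutative_novAlg_iff] at hidem hsq hann hcomm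
  rcases i with i | γ <;> rcases j with j | δ
  · fin_cases i <;> fin_cases j <;> simp_all
  · fin_cases i <;> simp_all
  · fin_cases j <;> simp_all
  · have htwist := h.squareZeroTwistCommute_iff γ
    simp only [squareZeroTwistCommute_novAlg_inr_iff, true_iff] at htwist
    rw [htwist]

end Separation

/-- Every nonzero 2-dimensional Novikov algebra over ℂ is isomorphic to
exactly one of N01–N05, N06^γ; these are pairwise non-isomorphic and
`N06^γ ≅ N06^δ` only if `γ = δ`. -/
theorem statement9 (N : Type*) [AddCommGroup N] [Module ℂ N]
    (hdim : Module.finrank ℂ N = 2)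
    (circ : N →ₗ[ℂ] N →ₗ[ℂ] N)
    (hnov₁ : ∀ x y z : N, circ (circ x y) z - circ x (circ y z) =
      circ (circ y x) z - circ y (circ x z))
    (hnov₂ : ∀ x y z : N, circ (circ x y) z = circ (circ x z) y)
    (hnz : ∃ x y : N, circ x y ≠ 0) :
    (∃ i : Fin 5 ⊕ ℂ, Iso1 (fun x y => circ x y) (tm (novAlg i))) ∧
    (∀ i j : Fin 5 ⊕ ℂ, Iso1 (tm (novAlg i)) (tm (novAlg j)) → i = j) := by
  refine ⟨?_, fun i j => eq_of_iso1_novAlg⟩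
  have hleft : IsLeftSymmetric circ := hnov₁
  have hcirc : circ ≠ 0 := by
    rintro rfl
    simp at hnz
  rcases hleft.exists_isSplitForm_or_isJordanForm hdim hnov₂ with
    ⟨v, w, a, d, hsplit⟩ | ⟨v, w, b, c, d, hjordan⟩
  · exact hsplit.exists_iso1_novAlg hdim hcirc
  · exact hjordan.exists_iso1_novAlg hdim hcirc
end
end

section
/- Let (P, ·) be a nonzero 2-dimensional commutative associative algebra over ℂ and let θ : P × P → P be a bilinear map. Then θ satisfies the three conditions (i) θ(θ(x,y),z) − θ(x,θ(y,z)) = θ(θ(y,x),z) − θ(y,θ(x,z)), (ii) θ(x,y)·z − θ(y,x)·z = θ(x, y·z) − θ(y, x·z), (iii) θ(x·y, z) = x·θ(y,z), for all x, y, z ∈ P, if and only if θ satisfies (i), (ii), (iii) together with the additional condition θ(θ(x,y),z) = θ(θ(x,z),y) for all x, y, z ∈ P. (Equivalently, the set of pre-Lie Poisson cocycles on (P, ·) equals the set of Novikov–Poisson cocycles on (P, ·).) -/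
/-!
Condition (iii) says that every operator `θ(-, z)` commutes with every multiplication operator.
If all multiplication operators were scalar, say `x · y = c(x) y`, then commutativity
`c(x) y = c(y) x` for independent `x`, `y` would force the product to vanish. So some
multiplication operator is not scalar, and in a plane a non-scalar operator has a cyclic vector.
Its centralizer therefore consists of polynomials in it, which commute with one another, and
the identity `θ(θ(x, y), z) = θ(θ(x, z), y)` says exactly that `θ(-, y)` and `θ(-, z)` commute.
-/

open Polynomial Module

/-- `v` is a cyclic vector of the endomorphism `f`, i.e. a generator of `M` as an `R[X]`-module on
which `X` acts through `f`. -/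
def IsCyclicVector {R M : Type*} [CommSemiring R] [AddCommMonoid M] [Module R M]
    (f : End R M) (v : M) : Prop :=
  ∀ w : M, ∃ p : R[X], aeval f p v = w

namespace IsCyclicVector

section Centralizer

variable {R M : Type*} [CommSemiring R] [AddCommMonoid M] [Module R M] {f g h : End R M} {v : M}

theorem exists_aeval_eq_of_commute (hv : IsCyclicVector f v) (hg : Commute g f) :
    ∃ p : R[X], aeval f p = g := by
  obtain ⟨p, hp⟩ := hv (g v)
  refine ⟨p, LinearMap.ext fun w => ?_⟩
  obtain ⟨q, rfl⟩ := hv w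
  have hgq : Commute g (aeval f q) :=
    Algebra.commute_of_mem_adjoin_singleton_of_commute (aeval_mem_adjoin_singleton R f) hg
  calc aeval f p (aeval f q v)
      = aeval f q (aeval f p v) := LinearMap.congr_fun ((Commute.all p q).map (aeval f)) v
    _ = aeval f q (g v) := by rw [hp]
    _ = g (aeval f q v) := (LinearMap.congr_fun hgq v).symm

theorem commute_of_commute (hv : IsCyclicVector f v) (hg : Commute g f) (hh : Commute h f) :
    Commute g h := by
  obtain ⟨p, rfl⟩ := hv.exists_aeval_eq_of_commute hg
  obtain ⟨q, rfl⟩ := hv.exists_aeval_eq_of_commute hh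
  exact (Commute.all p q).map (aeval f)

end Centralizer

section Field

variable {K V : Type*} [Field K] [AddCommGroup V] [Module K V] {f : End K V} {v : V}

theorem of_linearIndependent_pow {n : ℕ} [NeZero n] (hn : finrank K V = n)
    (hv : LinearIndependent K fun i : Fin n => (f ^ (i : ℕ)) v) : IsCyclicVector f v := by
  intro w
  have hspan := hv.span_eq_top_of_card_eq_finrank (by simp [hn])
  obtain ⟨c, rfl⟩ :=
    (Submodule.mem_span_range_iff_exists_fun K).mp (hspan.ge (Submodule.mem_top (x := w)))
  exact ⟨∑ i, C (c i) * X ^ (i : ℕ), by simp [LinearMap.sum_apply]⟩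

theorem of_linearIndependent_pair (hdim : finrank K V = 2)
    (hv : LinearIndependent K ![v, f v]) : IsCyclicVector f v := by
  refine of_linearIndependent_pow hdim ?_
  convert hv using 1
  ext i
  fin_cases i <;> simp

end Field

end IsCyclicVector

theorem exists_linearIndependent_pair_apply_of_comm {R M : Type*} [CommRing R] [IsDomain R]
    [AddCommGroup M] [Module R M] [Free R M] (hrank : 1 < Module.rank R M)
    {mul : M →ₗ[R] M →ₗ[R] M} (hcomm : ∀ x y, mul x y = mul y x) (hne : mul ≠ 0) :
    ∃ x v, LinearIndependent R ![v, mul x v] := by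
  contrapose! hne with hdep
  have hscalar (x : M) : ∃ c : R, mul x = c • 1 :=
    LinearMap.exists_eq_smul_id_of_forall_notLinearIndependent (hdep x)
  choose c hc using hscalar
  ext1 x
  obtain rfl | hx := eq_or_ne x 0
  · simp
  obtain ⟨y, hxy⟩ := exists_linearIndependent_pair_of_one_lt_rank hrank hx
  have hrel : (-c y) • x + c x • y = 0 := by
    have h := hcomm x y
    simp only [hc, LinearMap.smul_apply, End.one_apply] at h
    rw [h, neg_smul, neg_add_cancel]
  have hcx : c x = 0 := (LinearIndependent.pair_iff.mp hxy _ _ hrel).2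
  rw [hc, hcx, zero_smul, LinearMap.zero_apply]

theorem statement11_general {K V : Type*} [Field K] [AddCommGroup V] [Module K V]
    (hdim : finrank K V = 2) {mul : V →ₗ[K] V →ₗ[K] V} (hcomm : ∀ x y, mul x y = mul y x)
    (hne : mul ≠ 0) {θ : V →ₗ[K] V →ₗ[K] V} (hθ : ∀ x y z, θ (mul x y) z = mul x (θ y z))
    (x y z : V) : θ (θ x y) z = θ (θ x z) y := by
  have hrank : 1 < Module.rank K V := one_lt_rank_of_one_lt_finrank (by omega)
  obtain ⟨m, v, hv⟩ := exists_linearIndependent_pair_apply_of_comm hrank hcomm hne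
  have hcyclic : IsCyclicVector (mul m) v := .of_linearIndependent_pair hdim hv
  have hcommute (w : V) : Commute (θ.flip w : End K V) (mul m) :=
    LinearMap.ext fun u => hθ m u w
  exact LinearMap.congr_fun (hcyclic.commute_of_commute (hcommute z) (hcommute y)) x

/-- Let `(P, ·)` be a nonzero 2-dimensional commutative associative
algebra over ℂ and let `θ : P × P → P` be a bilinear map.  Then `θ` satisfies the
pre-Lie Poisson cocycle conditions (i), (ii), (iii) if and only if it satisfies them
together with the additional Novikov condition `θ(θ(x,y),z) = θ(θ(x,z),y)`. -/
theorem statement11 (P : Type*) [AddCommGroup P] [Module ℂ P]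
    (hdim : Module.finrank ℂ P = 2)
    (mul : P →ₗ[ℂ] P →ₗ[ℂ] P)
    (hcomm : ∀ x y : P, mul x y = mul y x)
    (hassoc : ∀ x y z : P, mul (mul x y) z = mul x (mul y z))
    (hnz : ∃ x y : P, mul x y ≠ 0)
    (θ : P →ₗ[ℂ] P →ₗ[ℂ] P) :
    ((∀ x y z : P, θ (θ x y) z - θ x (θ y z) = θ (θ y x) z - θ y (θ x z)) ∧
     (∀ x y z : P, mul (θ x y) z - mul (θ y x) z = θ x (mul y z) - θ y (mul x z)) ∧
     (∀ x y z : P, θ (mul x y) z = mul x (θ y z))) ↔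
    ((∀ x y z : P, θ (θ x y) z - θ x (θ y z) = θ (θ y x) z - θ y (θ x z)) ∧
     (∀ x y z : P, mul (θ x y) z - mul (θ y x) z = θ x (mul y z) - θ y (mul x z)) ∧
     (∀ x y z : P, θ (mul x y) z = mul x (θ y z)) ∧
     (∀ x y z : P, θ (θ x y) z = θ (θ x z) y)) := by
  have hne : mul ≠ 0 := by
    rintro rfl
    simp at hnz
  exact ⟨fun ⟨hpreLie, hskew, hmodule⟩ =>
      ⟨hpreLie, hskew, hmodule, statement11_general hdim hcomm hne hmodule⟩,
    fun ⟨hpreLie, hskew, hmodule, _⟩ => ⟨hpreLie, hskew, hmodule⟩⟩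
end
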